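/- arXiv:2509.02162 — 2 statements merged into one kernel-verified Lean document; each statement's English description precedes it below -/
import Mathlib

section
/- Let n ≥ 2, let 𝓔 ⊂ 𝓛ⁿ contain all closed balls, and let ∂ : 𝓔 → 𝓛ⁿ be sequentially approximable on 𝓔 by polarizations, i.e., there is a sequence (P_k) of polarizations with ‖1_{(P_k ∘ ⋯ ∘ P_1)A} − 1_{∂A}‖_{L¹} → 0 for every A ∈ 𝓔. Then there is a hyperplane H such that for every closed ball B ⊂ ℝⁿ, ∂B = ∂B†, essentially, where B† is the reflection of B in H. In particular, for every v ∈ ℝⁿ with v ≠ 0, the translation map A ↦ A + v on 𝓔 is not sequentially approximable on 𝓔 by polarizations. -/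
open MeasureTheory Metric Filter Topology
open scoped RealInnerProductSpace

noncomputable section

abbrev Euc (n : ℕ) : Type := EuclideanSpace ℝ (Fin n)

/-- `A` is essentially equal to `B` (up to a set of measure zero). -/
def essEq {n : ℕ} (A B : Set (Euc n)) : Prop := volume ((A \ B) ∪ (B \ A)) = 0

/-- The symmetric difference of two sets. -/
def sd {n : ℕ} (A B : Set (Euc n)) : Set (Euc n) := (A \ B) ∪ (B \ A)

/-- The polarization of `A` with respect to the oriented hyperplane `{x : ⟪x,v⟫ = c}` whose
positive closed halfspace is `{x : ⟪x,v⟫ ≥ c}`. -/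
def polzn {n : ℕ} (v : Euc n) (c : ℝ) (A : Set (Euc n)) : Set (Euc n) :=
  {x | c ≤ ⟪x, v⟫ ∧ (x ∈ A ∨ x - (2 * (⟪x, v⟫ - c)) • v ∈ A)} ∪
  {x | ⟪x, v⟫ ≤ c ∧ x ∈ A ∧ x - (2 * (⟪x, v⟫ - c)) • v ∈ A}

/-- `P k ∘ ⋯ ∘ P 0`, the composition of the first `k + 1` maps of a sequence. -/
def seqComp {α : Type*} (P : ℕ → α → α) : ℕ → α → α
  | 0 => P 0
  | k + 1 => P (k + 1) ∘ seqComp P k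

/-- `D` is sequentially approximable on `𝓔` by polarizations. -/
def seqApproxPol {n : ℕ} (𝓔 : Set (Set (Euc n))) (D : Set (Euc n) → Set (Euc n)) : Prop :=
  ∃ P : ℕ → Set (Euc n) → Set (Euc n),
    (∀ k, ∃ (v : Euc n) (c : ℝ), ‖v‖ = 1 ∧ P k = polzn v c) ∧
    ∀ A ∈ 𝓔, Tendsto (fun k => volume (sd (seqComp P k A) (D A))) atTop (𝓝 0)

theorem polzn_ball {n : ℕ} (v : Euc n) (c : ℝ) (hv : ‖v‖ = 1) (x : Euc n) (r : ℝ) :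
    polzn v c (closedBall (x - (2 * (⟪x, v⟫ - c)) • v) r) = polzn v c (closedBall x r) := by
  have hvv : ⟪v, v⟫ = 1 := by rw [real_inner_self_eq_norm_sq, hv]; norm_num
  have key : ∀ a b : Euc n, ‖a - (2 * (⟪a, v⟫ - c)) • v - b‖ =
      ‖a - (b - (2 * (⟪b, v⟫ - c)) • v)‖ := by
    intro a b
    have e1 : a - (2 * (⟪a, v⟫ - c)) • v - b = (a - b) - (2 * (⟪a, v⟫ - c)) • v := by abel
    have e2 : a - (b - (2 * (⟪b, v⟫ - c)) • v) = (a - b) + (2 * (⟪b, v⟫ - c)) • v := by abel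
    rw [← sq_eq_sq₀ (norm_nonneg _) (norm_nonneg _), e1, e2, norm_sub_sq_real,
      norm_add_sq_real, inner_smul_right, inner_smul_right, norm_smul, norm_smul, mul_pow,
      mul_pow, hv, inner_sub_left, Real.norm_eq_abs, Real.norm_eq_abs, sq_abs, sq_abs]
    ring
  have inv : ∀ a : Euc n, (a - (2 * (⟪a, v⟫ - c)) • v) -
      (2 * (⟪a - (2 * (⟪a, v⟫ - c)) • v, v⟫ - c)) • v = a := by
    intro a
    rw [inner_sub_left, real_inner_smul_left, hvv]
    module
  have m1 : ∀ a : Euc n, a ∈ closedBall (x - (2 * (⟪x, v⟫ - c)) • v) r ↔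
      a - (2 * (⟪a, v⟫ - c)) • v ∈ closedBall x r := by
    intro a
    rw [mem_closedBall, mem_closedBall, dist_eq_norm, dist_eq_norm, key]
  ext a
  simp only [polzn, Set.mem_union, Set.mem_setOf_eq, m1, inv]
  tauto

theorem part1 {n : ℕ} (𝓔 : Set (Set (Euc n)))
    (hb : ∀ (x : Euc n) (r : ℝ), 0 < r → closedBall x r ∈ 𝓔)
    (D : Set (Euc n) → Set (Euc n)) (hseq : seqApproxPol 𝓔 D) :
    ∃ (v : Euc n) (c : ℝ), ‖v‖ = 1 ∧
      ∀ (x : Euc n) (r : ℝ), 0 < r →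
        essEq (D (closedBall x r))
          (D (closedBall (x - (2 * (⟪x, v⟫ - c)) • v) r)) := by
  obtain ⟨P, hP, hl⟩ := hseq
  obtain ⟨v, c, hv, h0⟩ := hP 0
  refine ⟨v, c, hv, fun x r hr => ?_⟩
  have hk : ∀ k, seqComp P k (closedBall (x - (2 * (⟪x, v⟫ - c)) • v) r) =
      seqComp P k (closedBall x r) := by
    intro k
    induction k with
    | zero => simp only [seqComp, h0]; exact polzn_ball v c hv x r
    | succ k ih => simp only [seqComp, Function.comp_apply, ih]
  have h1 := hl _ (hb x r hr)
  have h2 := hl _ (hb (x - (2 * (⟪x, v⟫ - c)) • v) r hr)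
  simp only [hk] at h2
  have h3 := h1.add h2
  rw [add_zero] at h3
  refine le_antisymm (ge_of_tendsto' h3 fun k => ?_) zero_le
  refine (measure_mono ?_).trans (measure_union_le _ _)
  intro y
  simp only [sd, Set.mem_union, Set.mem_diff]
  tauto

/-- Lemma 5.3: if `∂ : 𝓔 → 𝓛ⁿ` is sequentially approximable on `𝓔` by polarizations, where
`𝓔` contains all balls, then there is a hyperplane `H` such that `∂B = ∂B†`, essentially,
for each ball `B`, where `B†` is the reflection of `B` in `H`.  In particular, nontrivial
translations are not sequentially approximable on `𝓔` by polarizations. -/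
theorem stmt16 {n : ℕ} (hn : 2 ≤ n)
    (𝓔 : Set (Set (Euc n)))
    (h𝓔meas : ∀ A ∈ 𝓔, MeasurableSet A ∧ volume A ≠ ⊤)
    (h𝓔balls : ∀ (x : Euc n) (r : ℝ), 0 < r → closedBall x r ∈ 𝓔)
    (D : Set (Euc n) → Set (Euc n))
    (hDmeas : ∀ A ∈ 𝓔, MeasurableSet (D A) ∧ volume (D A) ≠ ⊤)
    (hseq : seqApproxPol 𝓔 D) :
    (∃ (v : Euc n) (c : ℝ), ‖v‖ = 1 ∧
      ∀ (x : Euc n) (r : ℝ), 0 < r →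
        essEq (D (closedBall x r))
          (D (closedBall (x - (2 * (⟪x, v⟫ - c)) • v) r))) ∧
    (∀ w : Euc n, w ≠ 0 → ¬ seqApproxPol 𝓔 (fun A => (fun y => y + w) '' A)) := by
  refine ⟨part1 𝓔 h𝓔balls D hseq, fun w _ hs => ?_⟩
  obtain ⟨v, c, hv, h⟩ := part1 𝓔 h𝓔balls _ hs
  have hvv : ⟪v, v⟫ = 1 := by rw [real_inner_self_eq_norm_sq, hv]; norm_num
  have h' := h ((c + 1) • v) (1 / 2) (by norm_num)
  have e : (c + 1) • v - (2 * (⟪(c + 1) • v, v⟫ - c)) • v = (c - 1) • v := by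
    rw [real_inner_smul_left, hvv]
    module
  rw [e] at h'
  have hpos : 0 < volume (closedBall ((c + 1) • v + w) (1 / 2)) :=
    measure_closedBall_pos _ _ (by norm_num)
  refine absurd (measure_mono_null ?_ h') hpos.ne'
  intro y hy
  left
  rw [mem_closedBall, dist_eq_norm] at hy
  refine ⟨⟨y - w, ?_, by simp⟩, ?_⟩
  · rw [mem_closedBall, dist_eq_norm]
    convert hy using 2
    abel
  · rintro ⟨z, hz, rfl⟩
    rw [mem_closedBall, dist_eq_norm] at hz
    have e3 : (2 : ℝ) • v = (z - (c - 1) • v) - (z + w - ((c + 1) • v + w)) := by module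
    have h4 := norm_sub_le (z - (c - 1) • v) (z + w - ((c + 1) • v + w))
    rw [← e3, norm_smul, hv] at h4
    norm_num at h4 hz hy
    linarith
end
end

section
/- For a ∈ ℝ, let P_a denote the polarization of subsets of ℝ with respect to the point a with the usual orientation: (P_a A) ∩ [a,∞) = (A ∪ (2a − A)) ∩ [a,∞) and (P_a A) ∩ (−∞,a] = (A ∩ (2a − A)) ∩ (−∞,a]. For m ∈ ℕ and A ⊂ ℝ, let A_{m,0} = P_0 ∘ P_{−1/2^m} ∘ P_{−2/2^m} ∘ ⋯ ∘ P_{−2^{2m}/2^m} A (the composition of the polarizations at the points k/2^m for k = −2^{2m}, −2^{2m}+1, …, −1, 0, applied in increasing order of k). Then for every compact set A ⊂ ℝ, the indicator functions 1_{A_{m,0}} converge in L¹(ℝ) as m → ∞ to the indicator function of the set [−r_A, r_A] ∪ (A ∩ [0,∞)), where r_A ≥ 0 is chosen so that 𝓗¹([−r_A, r_A] ∪ (A ∩ [0,∞))) = 𝓗¹(A). (The limit set is the image of A under the Solynin set map in ℝ with respect to {0} with the usual orientation.) -/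
open MeasureTheory Filter Topology

noncomputable section

/-- The polarization of `A ⊂ ℝ` with respect to the point `a`, with the usual orientation
of `ℝ`: `(P_a A) ∩ [a,∞) = (A ∪ (2a − A)) ∩ [a,∞)` and
`(P_a A) ∩ (−∞,a] = (A ∩ (2a − A)) ∩ (−∞,a]`. -/
def polzn1 (a : ℝ) (A : Set ℝ) : Set ℝ :=
  {x | a ≤ x ∧ (x ∈ A ∨ 2 * a - x ∈ A)} ∪ {x | x ≤ a ∧ x ∈ A ∧ 2 * a - x ∈ A}

/-- `A_{m,0} = P_0 ∘ P_{−1/2^m} ∘ ⋯ ∘ P_{−2^{2m}/2^m} A`: the composition of the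
polarizations at the points `k/2^m`, for `k = −2^{2m}, …, −1, 0`, applied in increasing
order of `k`. -/
def Am0 (m : ℕ) (A : Set ℝ) : Set ℝ :=
  (List.range (2 ^ (2 * m) + 1)).foldl
    (fun S j => polzn1 (((j : ℝ) - 2 ^ (2 * m)) / 2 ^ m) S) A

theorem polzn1_mono (a : ℝ) {A B : Set ℝ} (h : A ⊆ B) : polzn1 a A ⊆ polzn1 a B := by
  rintro x (⟨h1, h2⟩ | ⟨h1, h2, h3⟩)
  · exact Or.inl ⟨h1, h2.imp (fun t => h t) (fun t => h t)⟩
  · exact Or.inr ⟨h1, h h2, h h3⟩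

theorem polzn1_meas (a : ℝ) {A : Set ℝ} (h : MeasurableSet A) : MeasurableSet (polzn1 a A) := by
  have h2 : MeasurableSet ((fun x : ℝ => 2 * a - x) ⁻¹' A) := by
    exact (by fun_prop : Measurable (fun x : ℝ => 2 * a - x)) h
  have : polzn1 a A = (Set.Ici a ∩ (A ∪ ((fun x : ℝ => 2 * a - x) ⁻¹' A))) ∪
      (Set.Iic a ∩ (A ∩ ((fun x : ℝ => 2 * a - x) ⁻¹' A))) := by
    ext x; simp [polzn1]
  rw [this]
  exact (measurableSet_Ici.inter (h.union h2)).union (measurableSet_Iic.inter (h.inter h2))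

theorem polzn1_vol (a : ℝ) {A : Set ℝ} (h : MeasurableSet A) :
    volume (polzn1 a A) = volume A := by
  have hmp : MeasurePreserving (fun x : ℝ => 2 * a - x) volume volume :=
    Measure.measurePreserving_sub_left volume (2 * a)
  set R : ℝ → ℝ := fun x => 2 * a - x with hR
  have hRA : MeasurableSet (R ⁻¹' A) := hmp.measurable h
  set C := A ∩ Set.Ioi a with hC
  set D := R ⁻¹' (A ∩ Set.Iio a) with hD
  have hCm : MeasurableSet C := h.inter measurableSet_Ioi
  have hDm : MeasurableSet D := hmp.measurable (h.inter measurableSet_Iio)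
  have hsplit : ∀ S : Set ℝ, MeasurableSet S →
      volume S = volume (S ∩ Set.Ioi a) + volume (S ∩ Set.Iio a) := by
    intro S hS
    rw [← measure_inter_add_sdiff S (measurableSet_Ioi (a := a))]
    congr 1
    have : S \ Set.Ioi a = S ∩ Set.Iic a := by ext x; simp
    rw [this]
    exact measure_congr ((ae_eq_refl S).inter Iio_ae_eq_Iic.symm)
  have h1 : polzn1 a A ∩ Set.Ioi a = C ∪ D := by
    ext x
    simp only [polzn1, hC, hD, hR, Set.mem_inter_iff, Set.mem_union, Set.mem_ofPred_eq,
      Set.mem_Ioi, Set.mem_preimage, Set.mem_Iio]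
    constructor
    · rintro ⟨⟨_, h2 | h2⟩ | ⟨h1, _⟩, h3⟩
      · exact Or.inl ⟨h2, h3⟩
      · exact Or.inr ⟨h2, by linarith⟩
      · exact absurd h3 (not_lt.mpr h1)
    · rintro (⟨h2, h3⟩ | ⟨h2, h3⟩)
      · exact ⟨Or.inl ⟨h3.le, Or.inl h2⟩, h3⟩
      · exact ⟨Or.inl ⟨by linarith, Or.inr h2⟩, by linarith⟩
  have h2 : polzn1 a A ∩ Set.Iio a = R ⁻¹' (C ∩ D) := by
    ext x
    simp only [polzn1, hC, hD, hR, Set.mem_inter_iff, Set.mem_union, Set.mem_ofPred_eq,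
      Set.mem_Ioi, Set.mem_preimage, Set.mem_Iio, sub_sub_cancel]
    constructor
    · rintro ⟨⟨h1, _⟩ | ⟨h1, h2, h4⟩, h3⟩
      · exact absurd h3 (not_lt.mpr h1)
      · exact ⟨⟨h4, by linarith⟩, h2, h3⟩
    · rintro ⟨⟨h4, _⟩, h2, h3⟩
      exact ⟨Or.inr ⟨h3.le, h2, h4⟩, h3⟩
  rw [hsplit _ (polzn1_meas a h), h1, h2,
    hmp.measure_preimage (hCm.inter hDm).nullMeasurableSet, measure_union_add_inter C hDm,
    hsplit A h, hD, hmp.measure_preimage (h.inter measurableSet_Iio).nullMeasurableSet]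

/-- partial composition -/
def foldP (m n : ℕ) (A : Set ℝ) : Set ℝ :=
  (List.range n).foldl
    (fun S j => polzn1 (((j : ℝ) - 2 ^ (2 * m)) / 2 ^ m) S) A

theorem foldP_succ (m n : ℕ) (A : Set ℝ) :
    foldP m (n + 1) A = polzn1 (((n : ℝ) - 2 ^ (2 * m)) / 2 ^ m) (foldP m n A) := by
  simp [foldP, List.range_succ]

theorem foldP_zero (m : ℕ) (A : Set ℝ) : foldP m 0 A = A := by simp [foldP]

theorem foldP_mono (m n : ℕ) {A B : Set ℝ} (h : A ⊆ B) : foldP m n A ⊆ foldP m n B := by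
  induction n with
  | zero => simpa [foldP_zero]
  | succ n ih => rw [foldP_succ, foldP_succ]; exact polzn1_mono _ ih

theorem foldP_meas (m n : ℕ) {A : Set ℝ} (h : MeasurableSet A) : MeasurableSet (foldP m n A) := by
  induction n with
  | zero => simpa [foldP_zero]
  | succ n ih => rw [foldP_succ]; exact polzn1_meas _ ih

theorem foldP_vol (m n : ℕ) {A : Set ℝ} (h : MeasurableSet A) :
    volume (foldP m n A) = volume A := by
  induction n with
  | zero => simp [foldP_zero]
  | succ n ih => rw [foldP_succ, polzn1_vol _ (foldP_meas m n h), ih]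

/-- The invariant. -/
def PInv (h : ℝ) (B : Set ℝ) (E : Finset ℝ) (a : ℝ) (S : Set ℝ) : Prop :=
  B ∩ Set.Ici a ⊆ S ∧ ∃ u v : ℝ, u ≤ v ∧ Set.Ioo u v ⊆ S ∧ 2 * a ≤ u + v ∧
    u + v ≤ 2 * (a + h) ∧
    volume.real (B ∩ Set.Iio v) ≤ v - u + 2 * h * ((E.filter (· < v)).card : ℝ)

theorem PInv_step {h : ℝ} (hh : 0 ≤ h) {B : Set ℝ} (hfin : volume B ≠ ⊤) {E : Finset ℝ}
    (hE : ∀ x y : ℝ, (∀ e ∈ E, e ∉ Set.Ico x y) →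
      Set.Ico x y ⊆ B ∨ B ∩ Set.Ico x y = ∅) {a : ℝ} {S : Set ℝ} (hI : PInv h B E a S) :
    PInv h B E (a + h) (polzn1 (a + h) S) := by
  obtain ⟨hB, u, v, huv, hJ, h1, h2, hm⟩ := hI
  set w := 2 * (a + h) - u with hw
  have hvw : v ≤ w := by linarith
  have hwv : w ≤ v + 2 * h := by linarith
  have hBs : B ∩ Set.Ici (a + h) ⊆ polzn1 (a + h) S := by
    rintro x ⟨hx, hx2⟩
    exact Or.inl ⟨hx2, Or.inl (hB ⟨hx, by simp at hx2 ⊢; linarith⟩)⟩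
  have hsub : ∀ X : Set ℝ, volume (B ∩ X) ≠ ⊤ := fun X =>
    ne_top_of_le_ne_top hfin (measure_mono Set.inter_subset_left)
  have hun : volume.real (B ∩ Set.Iio w) ≤
      volume.real (B ∩ Set.Iio v) + volume.real (B ∩ Set.Ico v w) := by
    have : B ∩ Set.Iio w = (B ∩ Set.Iio v) ∪ (B ∩ Set.Ico v w) := by
      rw [← Set.inter_union_distrib_left, Set.Iio_union_Ico_eq_Iio hvw]
    rw [this]
    exact measureReal_union_le _ _
  have hlen : volume.real (B ∩ Set.Ico v w) ≤ w - v := by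
    calc _ ≤ volume.real (Set.Ico v w) := measureReal_mono Set.inter_subset_right (by simp)
      _ = w - v := by simp [Real.volume_real_Ico_of_le hvw]
  have hcard : ((E.filter (· < v)).card : ℝ) ≤ ((E.filter (· < w)).card : ℝ) := by
    exact_mod_cast Finset.card_le_card
      (Finset.monotone_filter_right E (fun x _ (hx : x < v) => lt_of_lt_of_le hx hvw))
  have hcard' := mul_le_mul_of_nonneg_left hcard (by linarith : 0 ≤ 2 * h)
  refine ⟨hBs, ?_⟩
  by_cases hfill : Set.Ico v w ⊆ B
  · have hJ' : Set.Ioo u w ⊆ S := by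
      intro x hx
      by_cases hxv : x < v
      · exact hJ ⟨hx.1, hxv⟩
      · push Not at hxv
        exact hB ⟨hfill ⟨hxv, hx.2⟩, by simp; linarith⟩
    refine ⟨u, w, by linarith, ?_, by linarith, by linarith, by linarith⟩
    intro x hx
    rcases le_total (a + h) x with hx2 | hx2
    · exact Or.inl ⟨hx2, Or.inl (hJ' hx)⟩
    · exact Or.inr ⟨hx2, hJ' hx, hJ' ⟨by linarith [hx.1], by linarith [hx.1]⟩⟩
  · refine ⟨2 * (a + h) - v, w, by linarith, ?_, by linarith, by linarith, ?_⟩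
    · rintro x ⟨hx, hx'⟩
      rcases le_total (a + h) x with hx2 | hx2
      · exact Or.inl ⟨hx2, Or.inr (hJ ⟨by linarith, by linarith⟩)⟩
      · exact Or.inr ⟨hx2, hJ ⟨by linarith, by linarith⟩, hJ ⟨by linarith, by linarith⟩⟩
    · by_cases hends : ∀ e ∈ E, e ∉ Set.Ico v w
      · have := (hE v w hends).resolve_left hfill
        rw [this] at hun
        simp at hun
        linarith
      · push Not at hends
        obtain ⟨e, he, hev, hew⟩ := hends
        have hlt : (E.filter (· < v)).card < (E.filter (· < w)).card := by
          apply Finset.card_lt_card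
          rw [Finset.ssubset_iff_of_subset
            (Finset.monotone_filter_right E (fun x _ (hx : x < v) => lt_of_lt_of_le hx hvw))]
          exact ⟨e, by simp [he, hew], by simp [hev]⟩
        have : ((E.filter (· < v)).card : ℝ) + 1 ≤ ((E.filter (· < w)).card : ℝ) := by
          exact_mod_cast hlt
        have := mul_le_mul_of_nonneg_left this (by linarith : 0 ≤ 2 * h)
        linarith

theorem PInv_fold (m : ℕ) {B : Set ℝ} (hfin : volume B ≠ ⊤) {E : Finset ℝ}
    (hE : ∀ x y : ℝ, (∀ e ∈ E, e ∉ Set.Ico x y) →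
      Set.Ico x y ⊆ B ∨ B ∩ Set.Ico x y = ∅)
    (hlow : ∀ x ∈ B, -(2 : ℝ) ^ m ≤ x) (n : ℕ) :
    PInv (1 / 2 ^ m) B E (((n : ℝ) - 1 - 2 ^ (2 * m)) / 2 ^ m) (foldP m n B) := by
  have hp : (0 : ℝ) < 2 ^ m := by positivity
  induction n with
  | zero =>
    rw [foldP_zero]
    set a : ℝ := (((0 : ℕ) : ℝ) - 1 - 2 ^ (2 * m)) / 2 ^ m with ha
    have ha' : a = - 2 ^ m - 1 / 2 ^ m := by
      rw [ha, pow_mul', pow_two]; field_simp; push_cast; ring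
    have hp' : (0 : ℝ) < 1 / 2 ^ m := by positivity
    refine ⟨Set.inter_subset_left, a, a, le_rfl, by simp, by linarith, by linarith, ?_⟩
    have : B ∩ Set.Iio a = ∅ := by
      ext x
      simp only [Set.mem_inter_iff, Set.mem_Iio, Set.mem_empty_iff_false, iff_false, not_and, not_lt]
      intro hx
      linarith [hlow x hx]
    rw [this]
    simp
  | succ n ih =>
    have := PInv_step (by positivity) hfin hE ih
    rw [foldP_succ]
    have e : ((n : ℝ) - 1 - 2 ^ (2 * m)) / 2 ^ m + 1 / 2 ^ m
      = ((n : ℝ) - 2 ^ (2 * m)) / 2 ^ m := by rw [← add_div]; ring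
    have e' : (((n + 1 : ℕ) : ℝ) - 1 - 2 ^ (2 * m)) / 2 ^ m
      = ((n : ℝ) - 2 ^ (2 * m)) / 2 ^ m := by push_cast; ring
    rw [e'] 
    rw [e] at this
    exact this

theorem Am0_sub (m : ℕ) (A : Set ℝ) : A ∩ Set.Ici 0 ⊆ Am0 m A := by
  have : ∀ n ≤ 2 ^ (2 * m) + 1, A ∩ Set.Ici 0 ⊆ foldP m n A := by
    intro n
    induction n with
    | zero => intro _; rw [foldP_zero]; exact Set.inter_subset_left
    | succ n ih =>
      intro hn x hx
      rw [foldP_succ]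
      refine Or.inl ⟨?_, Or.inl (ih (by omega) hx)⟩
      have h1 : (n : ℝ) ≤ 2 ^ (2 * m) := by
        have : n ≤ 2 ^ (2 * m) := by omega
        exact_mod_cast this
      have h2 : (0 : ℝ) ≤ x := hx.2
      refine le_trans ?_ h2
      apply div_nonpos_of_nonpos_of_nonneg
      · linarith
      · positivity
  exact this _ le_rfl

theorem exists_cover (A : Set ℝ) (hA : IsCompact A) {ε : ENNReal} (hε : ε ≠ 0) :
    ∃ (B : Set ℝ) (E : Finset ℝ), A ⊆ B ∧ MeasurableSet B ∧ Bornology.IsBounded B ∧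
      volume B ≤ volume A + ε ∧
      ∀ x y : ℝ, (∀ e ∈ E, e ∉ Set.Ico x y) → Set.Ico x y ⊆ B ∨ B ∩ Set.Ico x y = ∅ := by
  obtain ⟨U, hAU, hU, hv⟩ := A.exists_isOpen_le_add volume hε
  have hb : ∀ x ∈ A, ∃ d > 0, Set.Ico (x - d) (x + d) ⊆ U := by
    intro x hx
    obtain ⟨d, hd, hd2⟩ := Metric.isOpen_iff.1 hU x (hAU hx)
    refine ⟨d / 2, by positivity, fun y hy => hd2 ?_⟩
    rw [Metric.mem_ball, Real.dist_eq, abs_lt]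
    constructor <;> linarith [hy.1, hy.2]
  choose! d hd hdU using hb
  obtain ⟨t, ht, htA⟩ := hA.elim_nhds_subcover (fun x => Set.Ico (x - d x) (x + d x))
    (fun x hx => Ico_mem_nhds (by linarith [hd x hx]) (by linarith [hd x hx]))
  refine ⟨⋃ x ∈ t, Set.Ico (x - d x) (x + d x),
    t.image (fun x => x - d x) ∪ t.image (fun x => x + d x), htA, ?_, ?_, ?_, ?_⟩
  · exact t.measurableSet_biUnion (fun _ _ => measurableSet_Ico)
  · rw [Bornology.isBounded_biUnion_finset]
    intro i _
    exact Metric.isBounded_Ico _ _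
  · refine le_trans (measure_mono ?_) hv
    exact Set.iUnion₂_subset (fun x hx => hdU x (ht x hx))
  · intro x y hE
    by_cases hne : (⋃ x ∈ t, Set.Ico (x - d x) (x + d x)) ∩ Set.Ico x y = ∅
    · exact Or.inr hne
    · left
      obtain ⟨z, hz, hzx⟩ := Set.nonempty_iff_ne_empty.2 hne
      simp only [Set.mem_iUnion] at hz
      obtain ⟨c, hc, hz1, hz2⟩ := hz
      have e1 := hE (c - d c) (Finset.mem_union_left _ (Finset.mem_image_of_mem _ hc))
      have e2 := hE (c + d c) (Finset.mem_union_right _ (Finset.mem_image_of_mem (fun x => x + d x) hc))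
      simp only [Set.mem_Ico, not_and, not_lt] at e1 e2
      have f1 : c - d c ≤ x := by
        by_contra hcon
        push Not at hcon
        linarith [e1 hcon.le, hzx.2]
      have f2 : y ≤ c + d c := e2 (by linarith [hzx.1])
      intro w hw
      simp only [Set.mem_iUnion]
      exact ⟨c, hc, by linarith [hw.1], by linarith [hw.2]⟩

theorem exists_r (A : Set ℝ) (hA : IsCompact A) :
    ∃ r : ℝ, 0 ≤ r ∧ 2 * r = volume.real (A ∩ Set.Iic r) := by
  have hfin : ∀ X, volume (A ∩ X) ≠ ⊤ := fun X =>
    ne_top_of_le_ne_top hA.measure_lt_top.ne (measure_mono Set.inter_subset_left)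
  have hlip : ∀ x y, x ≤ y → volume.real (A ∩ Set.Iic y) ≤ volume.real (A ∩ Set.Iic x) + (y - x) := by
    intro x y hxy
    have : A ∩ Set.Iic y = (A ∩ Set.Iic x) ∪ (A ∩ Set.Ioc x y) := by
      rw [← Set.inter_union_distrib_left, Set.Iic_union_Ioc_eq_Iic hxy]
    rw [this]
    refine (measureReal_union_le _ _).trans ?_
    gcongr
    calc _ ≤ volume.real (Set.Ioc x y) := measureReal_mono Set.inter_subset_right (by simp)
      _ = y - x := by simp [Real.volume_real_Ioc_of_le hxy]
  have hmono : ∀ x y, x ≤ y → volume.real (A ∩ Set.Iic x) ≤ volume.real (A ∩ Set.Iic y) := by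
    intro x y hxy
    exact measureReal_mono (Set.inter_subset_inter_right _ (Set.Iic_subset_Iic.2 hxy)) (hfin _)
  have hcont : Continuous (fun r => volume.real (A ∩ Set.Iic r)) := by
    have : LipschitzWith 1 (fun r => volume.real (A ∩ Set.Iic r)) := by
      apply LipschitzWith.of_le_add
      intro x y
      rw [Real.dist_eq]
      rcases le_total x y with h | h
      · have := hmono x y h
        have := abs_nonneg (x - y)
        linarith
      · have := hlip y x h
        have := le_abs_self (x - y)
        linarith
    exact this.continuous
  set M := volume.real A
  have hM : 0 ≤ M := measureReal_nonneg
  have hc : ContinuousOn (fun r => 2 * r - volume.real (A ∩ Set.Iic r)) (Set.Icc 0 M) := by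
    fun_prop
  have := intermediate_value_Icc hM hc
  have h0 : (0 : ℝ) ∈ Set.Icc (2 * 0 - volume.real (A ∩ Set.Iic 0))
      (2 * M - volume.real (A ∩ Set.Iic M)) := by
    have h1 : volume.real (A ∩ Set.Iic M) ≤ M :=
      measureReal_mono Set.inter_subset_left hA.measure_lt_top.ne
    have h2 : 0 ≤ volume.real (A ∩ Set.Iic 0) := measureReal_nonneg
    constructor <;> linarith
  obtain ⟨r, hr, hr2⟩ := this h0
  exact ⟨r, hr.1, by simp only at hr2; linarith⟩

theorem vol_T (A : Set ℝ) (hA : IsCompact A) {r : ℝ} (hr : 0 ≤ r)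
    (h : 2 * r = volume.real (A ∩ Set.Iic r)) :
    volume (Set.Icc (-r) r ∪ (A ∩ Set.Ici 0)) = volume A := by
  have hfin : ∀ X, volume (A ∩ X) ≠ ⊤ := fun X =>
    ne_top_of_le_ne_top hA.measure_lt_top.ne (measure_mono Set.inter_subset_left)
  have e : Set.Icc (-r) r ∪ (A ∩ Set.Ici 0) = Set.Icc (-r) r ∪ (A ∩ Set.Ioi r) := by
    ext x
    simp only [Set.mem_union, Set.mem_Icc, Set.mem_inter_iff, Set.mem_Ici, Set.mem_Ioi]
    constructor
    · rintro (h | ⟨h1, h2⟩)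
      · exact Or.inl h
      · by_cases hx : x ≤ r
        · exact Or.inl ⟨by linarith, hx⟩
        · exact Or.inr ⟨h1, not_le.1 hx⟩
    · rintro (h | ⟨h1, h2⟩)
      · exact Or.inl h
      · exact Or.inr ⟨h1, by linarith⟩
  have hAm := hA.measurableSet
  rw [e, measure_union _ (hAm.inter measurableSet_Ioi), Real.volume_Icc,
    show r - -r = 2 * r by ring, h, ofReal_measureReal (hfin _),
    ← measure_inter_add_sdiff A (measurableSet_Iic (a := r))]
  · congr 2
    ext x; simp
  · rw [Set.disjoint_left]
    rintro x hx ⟨_, hx2⟩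
    exact absurd hx.2 (not_le.2 hx2)

theorem main_bound (A B : Set ℝ) (hA : IsCompact A) {r : ℝ} (hr : 0 ≤ r)
    (h : 2 * r = volume.real (A ∩ Set.Iic r)) {E : Finset ℝ}
    (hAB : A ⊆ B) (hBm : MeasurableSet B) (hfin : volume B ≠ ⊤) {ε : ENNReal}
    (hv : volume B ≤ volume A + ε)
    (hE : ∀ x y : ℝ, (∀ e ∈ E, e ∉ Set.Ico x y) →
      Set.Ico x y ⊆ B ∨ B ∩ Set.Ico x y = ∅) (m : ℕ)
    (hlow : ∀ x ∈ B, -(2 : ℝ) ^ m ≤ x) :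
    volume ((Set.Icc (-r) r ∪ (A ∩ Set.Ici 0)) \ Am0 m A) ≤
      ENNReal.ofReal (4 * (1 / 2 ^ m) * (E.card + 1)) + ε := by
  obtain ⟨-, u, v, huv, hJ, h1, h2, hm⟩ := PInv_fold m hfin hE hlow (2 ^ (2 * m) + 1)
  have hAm := hA.measurableSet
  have hp' : (0 : ℝ) < 1 / 2 ^ m := by positivity
  set δ : ℝ := 1 / 2 ^ m
  have ha : (((2 ^ (2 * m) + 1 : ℕ) : ℝ) - 1 - 2 ^ (2 * m)) / 2 ^ m = 0 := by
    push_cast; simp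
  rw [ha] at h1 h2
  have hc : ((E.filter (· < v)).card : ℝ) ≤ E.card := by
    exact_mod_cast Finset.card_filter_le _ _
  set N : ℝ := (E.card : ℝ)
  have hN : 0 ≤ N := Nat.cast_nonneg _
  have hc' := mul_le_mul_of_nonneg_left hc (by linarith : 0 ≤ 2 * δ)
  have hδN : 0 ≤ δ * N := by positivity
  have hfinB : ∀ X, volume (B ∩ X) ≠ ⊤ := fun X =>
    ne_top_of_le_ne_top hfin (measure_mono Set.inter_subset_left)
  have key : u ≤ -r + 2 * δ * (N + 1) ∧ r - 2 * δ * (N + 1) ≤ v := by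
    rcases le_total r v with hrv | hrv
    · have : volume.real (A ∩ Set.Iic r) ≤ volume.real (B ∩ Set.Iio v) := by
        calc _ ≤ volume.real (B ∩ Set.Iic v) :=
              measureReal_mono (Set.inter_subset_inter hAB (Set.Iic_subset_Iic.2 hrv)) (hfinB _)
          _ = _ := measureReal_congr ((ae_eq_refl B).inter Iio_ae_eq_Iic.symm)
      constructor <;> nlinarith
    · have : volume.real (A ∩ Set.Iic r) ≤ volume.real (B ∩ Set.Iio v) + (r - v) := by
        calc _ ≤ volume.real ((B ∩ Set.Iio v) ∪ Set.Icc v r) := by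
              refine measureReal_mono ?_ (measure_union_lt_top (hfinB _).lt_top (by simp)).ne
              rintro x ⟨hx, hx2⟩
              by_cases hxv : x < v
              · exact Or.inl ⟨hAB hx, hxv⟩
              · exact Or.inr ⟨not_lt.1 hxv, hx2⟩
          _ ≤ _ := measureReal_union_le _ _
          _ = _ := by simp [Real.volume_real_Icc_of_le hrv]
      constructor <;> nlinarith
  set κ := 2 * δ * (N + 1) with hκ
  have hκ0 : 0 ≤ κ := by positivity
  have hsub : (Set.Icc (-r) r ∪ (A ∩ Set.Ici 0)) \ Am0 m A ⊆
      (Set.Icc (-r) (-r + κ) ∪ Set.Icc (r - κ) r) ∪ (Am0 m B \ Am0 m A) := by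
    rintro x ⟨hx | hx, hx2⟩
    · by_cases hxu : x ≤ u
      · exact Or.inl (Or.inl ⟨hx.1, by linarith⟩)
      by_cases hxv : v ≤ x
      · exact Or.inl (Or.inr ⟨by linarith, hx.2⟩)
      · exact Or.inr ⟨hJ ⟨not_le.1 hxu, not_le.1 hxv⟩, hx2⟩
    · exact absurd (Am0_sub m A hx) hx2
  refine (measure_mono hsub).trans ((measure_union_le _ _).trans (add_le_add ?_ ?_))
  · refine (measure_union_le _ _).trans ?_
    rw [Real.volume_Icc, Real.volume_Icc, ← ENNReal.ofReal_add (by linarith) (by linarith)]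
    apply ENNReal.ofReal_le_ofReal
    rw [hκ]; linarith
  · rw [measure_sdiff (show Am0 m A ⊆ Am0 m B from foldP_mono m _ hAB) (show MeasurableSet (Am0 m A) from foldP_meas m _ hAm).nullMeasurableSet]
    · rw [show volume (Am0 m B) = volume B from foldP_vol m _ hBm,
        show volume (Am0 m A) = volume A from foldP_vol m _ hAm]
      exact tsub_le_iff_left.2 hv
    · rw [show volume (Am0 m A) = volume A from foldP_vol m _ hAm]
      exact hA.measure_lt_top.ne

/-- Lemma 8.3: for every compact `A ⊂ ℝ`, the sets `A_{m,0}` converge in the `L¹` sense of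
indicator functions to `[−r_A, r_A] ∪ (A ∩ [0,∞))`, the image of `A` under the Solynin set
map in `ℝ` with respect to `{0}` with the usual orientation, where `r_A ≥ 0` is chosen so
that this set has the same measure as `A`. -/
theorem stmt19 (A : Set ℝ) (hA : IsCompact A) :
    ∃ r : ℝ, 0 ≤ r ∧
      volume (Set.Icc (-r) r ∪ (A ∩ Set.Ici 0)) = volume A ∧
      Tendsto (fun m =>
          volume ((Am0 m A \ (Set.Icc (-r) r ∪ (A ∩ Set.Ici 0))) ∪
            ((Set.Icc (-r) r ∪ (A ∩ Set.Ici 0)) \ Am0 m A)))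
        atTop (𝓝 0) := by
  obtain ⟨r, hr, h⟩ := exists_r A hA
  have hT := vol_T A hA hr h
  refine ⟨r, hr, hT, ?_⟩
  set T := Set.Icc (-r) r ∪ (A ∩ Set.Ici 0) with hTdef
  have hAm := hA.measurableSet
  have hTm : MeasurableSet T := measurableSet_Icc.union (hAm.inter measurableSet_Ici)
  have hsym : ∀ m, volume (Am0 m A \ T) = volume (T \ Am0 m A) := by
    intro m
    have hvm : volume (Am0 m A) = volume A := foldP_vol m _ hAm
    have hmm : MeasurableSet (Am0 m A) := foldP_meas m _ hAm
    have e1 := measure_inter_add_sdiff (μ := volume) (Am0 m A) hTm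
    have e2 := measure_inter_add_sdiff (μ := volume) T hmm
    rw [Set.inter_comm] at e2
    rw [hT, ← hvm, ← e1] at e2
    refine ((ENNReal.add_right_inj ?_).1 e2).symm
    refine ne_top_of_le_ne_top ?_ (measure_mono Set.inter_subset_left)
    rw [hvm]
    exact hA.measure_lt_top.ne
  have hlim : Tendsto (fun m => volume (T \ Am0 m A)) atTop (𝓝 0) := by
    rw [ENNReal.tendsto_nhds_zero]
    intro ε hε
    have hε2 : ε / 2 ≠ 0 := (ENNReal.half_pos hε.ne').ne'
    obtain ⟨B, E, hAB, hBm, hBb, hv, hE⟩ := exists_cover A hA hε2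
    obtain ⟨L, hL⟩ := hBb.bddBelow
    have t1 : Tendsto (fun m : ℕ => (2 : ℝ) ^ m) atTop atTop :=
      tendsto_pow_atTop_atTop_of_one_lt (by norm_num)
    have t2 : Tendsto (fun m : ℕ => ENNReal.ofReal (4 * (1 / 2 ^ m) * (E.card + 1)))
        atTop (𝓝 0) := by
      have : Tendsto (fun m : ℕ => 4 * (1 / (2 : ℝ) ^ m) * ((E.card : ℝ) + 1)) atTop
          (𝓝 (4 * 0 * ((E.card : ℝ) + 1))) := by
        refine Tendsto.mul_const _ (Tendsto.const_mul _ ?_)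
        simp only [one_div]; exact t1.inv_tendsto_atTop
      simpa using ENNReal.tendsto_ofReal this
    filter_upwards [t1.eventually_ge_atTop (-L),
      ENNReal.tendsto_nhds_zero.1 t2 (ε / 2) (ENNReal.half_pos hε.ne')] with m hm1 hm2
    have := main_bound A B hA hr h hAB hBm hBb.measure_lt_top.ne hv hE m
      (fun x hx => by linarith [hL hx])
    exact this.trans ((add_le_add hm2 le_rfl).trans (ENNReal.add_halves ε).le)
  have hlim2 := hlim.add hlim
  rw [add_zero] at hlim2
  refine tendsto_of_tendsto_of_tendsto_of_le_of_le tendsto_const_nhds hlim2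
    (fun _ => zero_le) (fun m => ?_)
  refine (measure_union_le _ _).trans ?_
  rw [hsym m]
end
end
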